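/- arXiv:quant-ph/0510185 — 3 statements merged into one kernel-verified Lean document; each statement's English description precedes it below -/
import Mathlib

section
/- Let G be a finite group and ρ a nontrivial irreducible representation of G of dimension d_ρ. Define B^{ρ,ρ} := (1/|G|) ∑_{s ∈ G} ([[I, ρ(s)],[ρ(s⁻¹), I]])^{⊗ 2} (a 4d_ρ² × 4d_ρ² matrix). Then the spectrum of B^{ρ,ρ} is either {1 (multiplicity 2d_ρ²), 1 + 1/d_ρ (multiplicity d_ρ²), 1 − 1/d_ρ (multiplicity d_ρ²)}, or {2 (multiplicity 1), 0 (multiplicity 1), 1 (multiplicity 2d_ρ² − 2), 1 ± 1/d_ρ (multiplicity d_ρ² each)}. -/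
/-!
Order the four blocks of the tensor square as `(1,1), (2,2), (1,2), (2,1)`. A nontrivial
irreducible `ρ` has mean zero, so averaging kills every block containing exactly one factor `ρ`,
and what remains is `[[1, P], [P, 1]] ⊕ [[1, Q], [Q, 1]]` with `P` the mean of `ρ ⊗ ρ` and `Q` the
mean of `ρ ⊗ ρ⁻¹`. The characteristic polynomial of `[[1, M], [M, 1]]` is that of `M²` evaluated at
`(X - 1)²`. By Schur orthogonality `Q` is `1/d` times the flip, so `Q² = 1/d²`. The idempotent `P`
projects onto the invariants of `ρ ⊗ ρ`; these are intertwiners from the dual of `ρ` to `ρ`, so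
`P` has rank at most one, and its rank decides between the two spectra.
-/

section

open Matrix Kronecker Polynomial

section BlockMatrices

/-- The reordering of the blocks of a Kronecker product of two `2 × 2` block matrices under which
the blocks `(1,1), (2,2)` come first and the mixed blocks `(1,2), (2,1)` come last. -/
def kroneckerBlockEquiv (l m n p : Type*) :
    (l ⊕ m) × (n ⊕ p) ≃ ((l × n) ⊕ (m × p)) ⊕ ((l × p) ⊕ (m × n)) :=
  (Equiv.sumProdDistrib l m (n ⊕ p)).trans <|
    (Equiv.sumCongr (Equiv.prodSumDistrib l n p)
      ((Equiv.prodSumDistrib m n p).trans (Equiv.sumComm _ _))).trans <|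
    Equiv.sumSumSumComm _ _ _ _

lemma reindex_kronecker_fromBlocks {l l' m m' n n' p p' R : Type*} [Mul R]
    (A₁ : Matrix l l' R) (B₁ : Matrix l m' R) (C₁ : Matrix m l' R) (D₁ : Matrix m m' R)
    (A₂ : Matrix n n' R) (B₂ : Matrix n p' R) (C₂ : Matrix p n' R) (D₂ : Matrix p p' R) :
    reindex (kroneckerBlockEquiv l m n p) (kroneckerBlockEquiv l' m' n' p')
        (fromBlocks A₁ B₁ C₁ D₁ ⊗ₖ fromBlocks A₂ B₂ C₂ D₂) =
      fromBlocks
        (fromBlocks (A₁ ⊗ₖ A₂) (B₁ ⊗ₖ B₂) (C₁ ⊗ₖ C₂) (D₁ ⊗ₖ D₂))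
        (fromBlocks (A₁ ⊗ₖ B₂) (B₁ ⊗ₖ A₂) (C₁ ⊗ₖ D₂) (D₁ ⊗ₖ C₂))
        (fromBlocks (A₁ ⊗ₖ C₂) (B₁ ⊗ₖ D₂) (C₁ ⊗ₖ A₂) (D₁ ⊗ₖ B₂))
        (fromBlocks (A₁ ⊗ₖ D₂) (B₁ ⊗ₖ C₂) (C₁ ⊗ₖ B₂) (D₁ ⊗ₖ A₂)) := by
  ext ((_ | _) | (_ | _)) ((_ | _) | (_ | _)) <;> rfl

variable {n R : Type*} [CommRing R] [Fintype n] [DecidableEq n]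

lemma det_fromBlocks_circulant (A B : Matrix n n R) :
    (fromBlocks A B B A).det = (A + B).det * (A - B).det := by
  have triangularize : fromBlocks 1 1 0 1 * fromBlocks A B B A * fromBlocks 1 (-1) 0 1 =
      fromBlocks (A + B) 0 B (A - B) := by
    simp only [fromBlocks_multiply, one_mul, zero_mul, zero_add, mul_one, mul_zero, add_zero,
      mul_neg, fromBlocks_inj, true_and]
    constructor <;> abel
  simpa using congrArg det triangularize

lemma charpoly_comp_eq_det (M : Matrix n n R) (q : R[X]) :
    M.charpoly.comp q = (scalar n q - C.mapMatrix M).det := by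
  rw [← Matrix.eval_charpoly, RingHom.mapMatrix_apply, charpoly_map, eval_map, Polynomial.comp]

lemma charpoly_fromBlocks_one_circulant (B : Matrix n n R) :
    (fromBlocks 1 B B 1).charpoly = (B * B).charpoly.comp ((X - 1) ^ 2) := by
  have charmatrix_one : (1 : Matrix n n R).charmatrix = scalar n (X - 1 : R[X]) := by
    rw [charmatrix, map_one C.mapMatrix, map_sub, map_one (scalar n)]
  have scalar_comm : Commute (scalar n (X - 1 : R[X])) (C.mapMatrix B) :=
    scalar_commute _ (Commute.all _) _
  calc (fromBlocks 1 B B 1).charpoly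
      = (scalar n (X - 1) + -C.mapMatrix B).det * (scalar n (X - 1) - -C.mapMatrix B).det := by
        rw [charpoly, charmatrix_fromBlocks, charmatrix_one, det_fromBlocks_circulant,
          RingHom.mapMatrix_apply]
    _ = (scalar n ((X - 1) ^ 2) - C.mapMatrix (B * B)).det := by
        rw [← det_mul, sub_neg_eq_add, ← sub_eq_add_neg, ← scalar_comm.mul_self_sub_mul_self_eq',
          map_mul, map_pow, sq]
    _ = (B * B).charpoly.comp ((X - 1) ^ 2) := (charpoly_comp_eq_det _ _).symm

lemma charpoly_vecMulVec_of_isIdempotentElem [IsDomain R] {u v : n → R}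
    (h : IsIdempotentElem (vecMulVec u v)) :
    (vecMulVec u v).charpoly = X ^ Fintype.card n ∨
      (vecMulVec u v).charpoly = X ^ (Fintype.card n - 1) * (X - 1) := by
  have h_smul : (v ⬝ᵥ u - 1) • vecMulVec u v = 0 := by
    rw [sub_smul, one_smul, sub_eq_zero, ← vecMulVec_smul, ← vecMulVec_mul_vecMulVec]
    exact h
  rcases smul_eq_zero.1 h_smul with h_dot | h_zero
  · right
    have : Nonempty n := by
      by_contra h_empty
      rw [not_nonempty_iff] at h_empty
      simp at h_dot
    have h_card : X ^ Fintype.card n = X ^ (Fintype.card n - 1) * (X : R[X]) :=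
      (pow_sub_one_mul Fintype.card_ne_zero X).symm
    rw [charpoly_vecMulVec, dotProduct_comm, sub_eq_zero.1 h_dot, h_card, one_smul,
      mul_sub, mul_one]
  · left
    rw [h_zero, charpoly_zero]

end BlockMatrices

section Average

/-- The mean `(1/|G|) ∑ s, f s` of a function on a finite type. It is `0`, by the convention
`0⁻¹ = 0`, when `|G|` vanishes in `K`. -/
def average (K : Type*) {G M : Type*} [Fintype G] [Field K] [AddCommGroup M] [Module K M]
    (f : G → M) : M :=
  (Fintype.card G : K)⁻¹ • ∑ s, f s

variable {K G M N A : Type*} [Fintype G] [Field K] [AddCommGroup M] [Module K M]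
  [AddCommGroup N] [Module K N] [Ring A] [Algebra K A]

lemma average_const [NeZero (Fintype.card G : K)] (x : M) : average K (fun _ : G => x) = x := by
  rw [average, Finset.sum_const, Finset.card_univ, ← Nat.cast_smul_eq_nsmul K,
    inv_smul_smul₀ (NeZero.ne _)]

lemma average_comp_equiv {H : Type*} [Fintype H] (e : H ≃ G) (f : G → M) :
    average K (fun s => f (e s)) = average K f := by
  rw [average, e.sum_comp f, Fintype.card_congr e, average]

lemma map_average (φ : M →ₗ[K] N) (f : G → M) :
    φ (average K f) = average K (fun s => φ (f s)) := by
  rw [average, map_smul, map_sum, average]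

lemma mul_average (a : A) (f : G → A) : a * average K f = average K (fun s => a * f s) :=
  map_average (LinearMap.mulLeft K a) f

lemma average_mul (f : G → A) (a : A) : average K f * a = average K (fun s => f s * a) :=
  map_average (LinearMap.mulRight K a) f

lemma average_apply {m n : Type*} (f : G → Matrix m n K) (i : m) (j : n) :
    average K f i j = average K (fun s => f s i j) :=
  map_average (entryLinearMap K K i j) f

lemma average_fromBlocks {l m n p : Type*} (A : G → Matrix n l K) (B : G → Matrix n m K)
    (C : G → Matrix p l K) (D : G → Matrix p m K) :
    average K (fun s => fromBlocks (A s) (B s) (C s) (D s)) =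
      fromBlocks (average K A) (average K B) (average K C) (average K D) := by
  ext (_ | _) (_ | _) <;> simp [average_apply]

lemma average_kronecker_left {l m n p : Type*} (A : Matrix l m K) (f : G → Matrix n p K) :
    average K (fun s => A ⊗ₖ f s) = A ⊗ₖ average K f :=
  (map_average (kroneckerBilinear (R := K) A) f).symm

lemma average_kronecker_right {l m n p : Type*} (f : G → Matrix l m K) (B : Matrix n p K) :
    average K (fun s => f s ⊗ₖ B) = average K f ⊗ₖ B :=
  (map_average ((kroneckerBilinear (R := K)).flip B) f).symm

variable [Group G]

lemma average_comp_inv (f : G → M) : average K (fun s => f s⁻¹) = average K f :=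
  average_comp_equiv (Equiv.inv G) f

lemma map_mul_average (ρ : G →* A) (g : G) : ρ g * average K ρ = average K ρ := by
  simp only [mul_average, ← map_mul]
  exact average_comp_equiv (Equiv.mulLeft g) ρ

lemma isIdempotentElem_average [NeZero (Fintype.card G : K)] (ρ : G →* A) :
    IsIdempotentElem (average K ρ) := by
  rw [IsIdempotentElem, average_mul]
  simp only [map_mul_average, average_const]

lemma commute_average_conj (ρ : G →* A) (a : A) (g : G) :
    Commute (ρ g) (average K fun s => ρ s * a * ρ s⁻¹) := by
  rw [Commute, SemiconjBy, mul_average, average_mul,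
    ← average_comp_equiv (Equiv.mulLeft g) fun s => ρ s * a * ρ s⁻¹ * ρ g]
  congr 1 with s
  have h_inv : ρ g⁻¹ * ρ g = 1 := by rw [← map_mul, inv_mul_cancel, map_one]
  simp only [Equiv.coe_mulLeft, _root_.mul_inv_rev, map_mul, mul_assoc, h_inv, mul_one]

end Average

section Schur

variable {ι n K : Type*} [Fintype n] [Field K]

/-- A family of square matrices acts irreducibly if no subspace other than `⊥` and `⊤` is stable
under all of its members. The zero-dimensional space is allowed. -/
def ActsIrreducibly (A : ι → Matrix n n K) : Prop :=
  ∀ W : Submodule K (n → K), (∀ i, ∀ v ∈ W, A i *ᵥ v ∈ W) → W = ⊥ ∨ W = ⊤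

namespace ActsIrreducibly

variable {A B : ι → Matrix n n K} {S T : Matrix n n K}

lemma isUnit_of_intertwines [DecidableEq n] (hA : ActsIrreducibly A)
    (hS : ∀ i, A i * S = S * B i) (hS₀ : S ≠ 0) : IsUnit S := by
  have range_stable : ∀ i, ∀ v ∈ LinearMap.range S.mulVecLin,
      A i *ᵥ v ∈ LinearMap.range S.mulVecLin := by
    rintro i _ ⟨w, rfl⟩
    exact ⟨B i *ᵥ w, by simp only [mulVecLin_apply, mulVec_mulVec, hS]⟩
  rcases hA _ range_stable with h_bot | h_top
  · rw [LinearMap.range_eq_bot, ← toLin'_apply', map_eq_zero_iff _ toLin'.injective] at h_bot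
    exact absurd h_bot hS₀
  · exact mulVec_surjective_iff_isUnit.1 (LinearMap.range_eq_top.1 h_top)

lemma exists_eq_smul_of_intertwines [IsAlgClosed K] (hA : ActsIrreducibly A)
    (hS : ∀ i, A i * S = S * B i) (hT : ∀ i, A i * T = T * B i) (hS₀ : S ≠ 0) :
    ∃ c : K, T = c • S := by
  classical
  have : Nontrivial (Matrix n n K) := ⟨S, 0, hS₀⟩
  obtain ⟨U, rfl⟩ := hA.isUnit_of_intertwines hS hS₀
  obtain ⟨c, hc⟩ :=
    spectrum.nonempty_of_isAlgClosed_of_finiteDimensional K (T * (↑U⁻¹ : Matrix n n K))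
  refine ⟨c, ?_⟩
  by_contra h_ne
  have h_unit : IsUnit (c • (U : Matrix n n K) - T) := by
    refine hA.isUnit_of_intertwines (B := B) (fun i => ?_) (sub_ne_zero.2 (Ne.symm h_ne))
    rw [mul_sub, sub_mul, mul_smul_comm, smul_mul_assoc, hS, hT]
  refine hc ?_
  rw [spectrum.mem_resolventSet_iff, ← Units.isUnit_mul_units _ U, sub_mul,
    Algebra.algebraMap_eq_smul_one]
  simpa [mul_assoc] using h_unit

end ActsIrreducibly

end Schur

section IrreducibleRepresentation

/-- The tensor square `ρ ⊗ ρ` of a matrix representation. -/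
def tensorSquare {G n R : Type*} [Monoid G] [Fintype n] [DecidableEq n] [CommSemiring R]
    (ρ : G →* Matrix n n R) : G →* Matrix (n × n) (n × n) R where
  toFun g := ρ g ⊗ₖ ρ g
  map_one' := by rw [map_one, one_kronecker_one]
  map_mul' g h := by rw [map_mul, mul_kronecker_mul]

variable {G n K : Type*} [Group G] [Fintype n] [DecidableEq n] [Field K]
  {ρ : G →* Matrix n n K}

lemma reindex_average_kronecker_fromBlocks [Fintype G] [NeZero (Fintype.card G : K)]
    (h_zero : average K ρ = 0) :
    reindex (kroneckerBlockEquiv n n n n) (kroneckerBlockEquiv n n n n)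
        (average K fun s =>
          fromBlocks 1 (ρ s) (ρ s⁻¹) 1 ⊗ₖ fromBlocks 1 (ρ s) (ρ s⁻¹) 1) =
      fromBlocks
        (fromBlocks 1 (average K (tensorSquare ρ)) (average K (tensorSquare ρ)) 1) 0 0
        (fromBlocks 1 (average K fun s => ρ s ⊗ₖ ρ s⁻¹) (average K fun s => ρ s ⊗ₖ ρ s⁻¹) 1) := by
  have h_zero_inv : average K (fun s => ρ s⁻¹) = 0 := (average_comp_inv ρ).trans h_zero
  have h_square_inv : average K (fun s => ρ s⁻¹ ⊗ₖ ρ s⁻¹) = average K (tensorSquare ρ) :=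
    average_comp_inv (tensorSquare ρ)
  have h_mixed_inv : average K (fun s => ρ s⁻¹ ⊗ₖ ρ s) = average K fun s => ρ s ⊗ₖ ρ s⁻¹ := by
    simpa only [inv_inv] using average_comp_inv fun s => ρ s ⊗ₖ ρ s⁻¹
  rw [← coe_reindexLinearEquiv K K, ← LinearEquiv.coe_coe, map_average]
  simp only [LinearEquiv.coe_coe, coe_reindexLinearEquiv, reindex_kronecker_fromBlocks,
    average_fromBlocks, average_kronecker_left, average_kronecker_right, average_const, h_zero,
    h_zero_inv, h_square_inv, h_mixed_inv, kronecker_zero, zero_kronecker, one_kronecker_one,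
    fromBlocks_zero]
  rfl

lemma charpoly_average_kronecker_fromBlocks [Fintype G] [NeZero (Fintype.card G : K)]
    (h_zero : average K ρ = 0) :
    (average K fun s =>
        fromBlocks 1 (ρ s) (ρ s⁻¹) 1 ⊗ₖ fromBlocks 1 (ρ s) (ρ s⁻¹) 1).charpoly =
      (average K (tensorSquare ρ)).charpoly.comp ((X - 1) ^ 2) *
        ((average K fun s => ρ s ⊗ₖ ρ s⁻¹) *
          average K fun s => ρ s ⊗ₖ ρ s⁻¹).charpoly.comp ((X - 1) ^ 2) := by
  rw [← charpoly_reindex (kroneckerBlockEquiv n n n n),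
    reindex_average_kronecker_fromBlocks h_zero, charpoly_fromBlocks_zero₁₂,
    charpoly_fromBlocks_one_circulant, charpoly_fromBlocks_one_circulant,
    (isIdempotentElem_average (tensorSquare ρ)).eq]

namespace ActsIrreducibly

/-- The invariant vectors of `ρ ⊗ ρ` are, as matrices, the `S` with `ρ g * S * (ρ g)ᵀ = S`, that is,
the intertwiners from the dual representation `g ↦ (ρ g⁻¹)ᵀ` to `ρ`. -/
lemma exists_eq_smul_of_tensorSquare_invariant [IsAlgClosed K] (hρ : ActsIrreducibly ρ)
    {S T : Matrix n n K} (hS : ∀ g, tensorSquare ρ g *ᵥ S.vec = S.vec)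
    (hT : ∀ g, tensorSquare ρ g *ᵥ T.vec = T.vec) (hS₀ : S ≠ 0) : ∃ c : K, T = c • S := by
  have intertwines : ∀ R : Matrix n n K, (∀ g, tensorSquare ρ g *ᵥ R.vec = R.vec) →
      ∀ g, ρ g * R = R * (ρ g⁻¹)ᵀ := by
    intro R hR g
    have hR' : ρ g * R * (ρ g)ᵀ = R := by
      rw [← vec_inj, ← kronecker_mulVec_vec]
      exact hR g
    calc ρ g * R = ρ g * R * (ρ g⁻¹ * ρ g)ᵀ := by
          rw [← map_mul, inv_mul_cancel, map_one, transpose_one, mul_one]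
      _ = R * (ρ g⁻¹)ᵀ := by rw [transpose_mul, ← mul_assoc, hR']
  exact hρ.exists_eq_smul_of_intertwines (intertwines S hS) (intertwines T hT) hS₀

variable [Fintype G]

lemma average_eq_zero (hρ : ActsIrreducibly ρ) (h_nontriv : ∃ g, ρ g ≠ 1) :
    average K ρ = 0 := by
  by_contra h_ne
  have h_unit : IsUnit (average K ρ) :=
    hρ.isUnit_of_intertwines (B := 1)
      (fun g => by rw [map_mul_average, Pi.one_apply, mul_one]) h_ne
  obtain ⟨g, hg⟩ := h_nontriv
  exact hg (h_unit.mul_eq_right.1 (map_mul_average ρ g))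

variable [IsAlgClosed K]

lemma exists_average_tensorSquare_eq_vecMulVec (hρ : ActsIrreducibly ρ) :
    ∃ u v : n × n → K, average K (tensorSquare ρ) = vecMulVec u v := by
  set P := average K (tensorSquare ρ)
  let S (q : n × n) : Matrix n n K := of fun i j => P (j, i) q
  have S_invariant (q : n × n) (g : G) : tensorSquare ρ g *ᵥ (S q).vec = (S q).vec :=
    congrArg (fun M => M.col q) (map_mul_average (K := K) (tensorSquare ρ) g)
  obtain ⟨S₀, hS₀⟩ : ∃ S₀, ∀ q, ∃ c : K, S q = c • S₀ := by
    by_cases h_zero : ∀ q, S q = 0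
    · exact ⟨0, fun q => ⟨0, by rw [h_zero, smul_zero]⟩⟩
    · push Not at h_zero
      obtain ⟨q₀, hq₀⟩ := h_zero
      exact ⟨S q₀, fun q => hρ.exists_eq_smul_of_tensorSquare_invariant (S_invariant q₀)
        (S_invariant q) hq₀⟩
  choose v hv using hS₀
  refine ⟨S₀.vec, v, ?_⟩
  ext ⟨i, j⟩ q
  rw [vecMulVec_apply, mul_comm]
  exact congrFun₂ (hv q) j i

variable [NeZero (Fintype.card G : K)]

lemma charpoly_average_tensorSquare (hρ : ActsIrreducibly ρ) :
    (average K (tensorSquare ρ)).charpoly = X ^ Fintype.card n ^ 2 ∨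
      (average K (tensorSquare ρ)).charpoly = X ^ (Fintype.card n ^ 2 - 1) * (X - 1) := by
  obtain ⟨u, v, huv⟩ := hρ.exists_average_tensorSquare_eq_vecMulVec
  have h_idem := isIdempotentElem_average (K := K) (tensorSquare ρ)
  rw [huv] at h_idem ⊢
  simpa only [Fintype.card_prod, ← sq] using charpoly_vecMulVec_of_isIdempotentElem h_idem

lemma card_smul_average_conj (hρ : ActsIrreducibly ρ) (M : Matrix n n K) :
    (Fintype.card n : K) • average K (fun s => ρ s * M * ρ s⁻¹) = M.trace • 1 := by
  cases isEmpty_or_nonempty n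
  · exact Subsingleton.elim _ _
  obtain ⟨c, hc⟩ := hρ.exists_eq_smul_of_intertwines (B := ρ) (S := 1)
    (fun g => by rw [mul_one, one_mul]) (fun g => commute_average_conj (K := K) ρ M g) one_ne_zero
  have trace_eq : (average K fun s => ρ s * M * ρ s⁻¹).trace = M.trace := by
    have trace_conj (s : G) : (ρ s * M * ρ s⁻¹).trace = M.trace := by
      rw [trace_mul_comm, ← mul_assoc, ← map_mul, inv_mul_cancel, map_one, one_mul]
    rw [← traceLinearMap_apply n K K, map_average]
    simp only [traceLinearMap_apply, trace_conj, average_const]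
  rw [hc, trace_smul, trace_one, smul_eq_mul] at trace_eq
  rw [hc, smul_smul, mul_comm, trace_eq]

lemma natCast_card_ne_zero [Nonempty n] (hρ : ActsIrreducibly ρ) : (Fintype.card n : K) ≠ 0 := by
  intro h_card
  obtain ⟨i⟩ := ‹Nonempty n›
  have h_one := congrFun₂ (hρ.card_smul_average_conj (single i i 1)) i i
  simp [h_card] at h_one

lemma average_kronecker_inv (hρ : ActsIrreducibly ρ) :
    average K (fun s => ρ s ⊗ₖ ρ s⁻¹) =
      (Fintype.card n : K)⁻¹ • Equiv.Perm.permMatrix K (Equiv.prodComm n n) := by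
  ext ⟨i, k⟩ ⟨j, l⟩
  have : Nonempty n := ⟨i⟩
  have conj_single_apply (s : G) :
      (ρ s * single j k (1 : K) * ρ s⁻¹) i l = ρ s i j * ρ s⁻¹ k l := by
    rw [single_eq_single_vecMulVec_single, mul_vecMulVec, vecMulVec_mul, vecMulVec_apply,
      mulVec_single_one, single_one_vecMul]
    rfl
  have orthogonality : (Fintype.card n : K) • average K (fun s => ρ s i j * ρ s⁻¹ k l) =
      (single j k (1 : K)).trace * (1 : Matrix n n K) i l := by
    simpa only [Matrix.smul_apply, average_apply, conj_single_apply, smul_eq_mul] using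
      congrFun₂ (hρ.card_smul_average_conj (single j k 1)) i l
  rw [average_apply, Matrix.smul_apply, eq_inv_smul_iff₀ hρ.natCast_card_ne_zero]
  simp only [kroneckerMap_apply, orthogonality]
  rcases eq_or_ne j k with rfl | h_ne
  · simp [one_apply]
  · simp [trace_single_eq_of_ne _ _ _ h_ne, h_ne.symm]

lemma average_kronecker_inv_mul_self (hρ : ActsIrreducibly ρ) :
    average K (fun s => ρ s ⊗ₖ ρ s⁻¹) * average K (fun s => ρ s ⊗ₖ ρ s⁻¹) =
      scalar (n × n) ((Fintype.card n : K)⁻¹ ^ 2) := by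
  have flip_mul_self : (Equiv.prodComm n n : Equiv.Perm (n × n)) * Equiv.prodComm n n = 1 := by
    ext <;> rfl
  rw [hρ.average_kronecker_inv, smul_mul_smul_comm, ← permMatrix_mul, flip_mul_self,
    permMatrix_one, scalar_apply, smul_one_eq_diagonal, sq]

lemma charpoly_average_kronecker_inv_sq_comp (hρ : ActsIrreducibly ρ) :
    (average K (fun s => ρ s ⊗ₖ ρ s⁻¹) * average K (fun s => ρ s ⊗ₖ ρ s⁻¹)).charpoly.comp
        ((X - 1) ^ 2) =
      (X - C (1 + (Fintype.card n : K)⁻¹)) ^ (Fintype.card n ^ 2) *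
        (X - C (1 - (Fintype.card n : K)⁻¹)) ^ (Fintype.card n ^ 2) := by
  rw [hρ.average_kronecker_inv_mul_self, scalar_apply, charpoly_diagonal, Finset.prod_const,
    Finset.card_univ, Fintype.card_prod, ← sq, pow_comp, ← mul_pow]
  congr 1
  simp only [sub_comp, X_comp, C_comp, C_add, C_sub, C_1]
  rw [C_pow]
  ring

end ActsIrreducibly

theorem spectrum_B_rho_rho_general
    [Fintype G] [IsAlgClosed K] [NeZero (Fintype.card G : K)] (hρirr : ActsIrreducibly ρ)
    (hnontriv : ∃ g : G, ρ g ≠ 1) :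
    ((Fintype.card G : K)⁻¹ • ∑ s : G,
        (fromBlocks 1 (ρ s) (ρ s⁻¹) 1) ⊗ₖ
          (fromBlocks 1 (ρ s) (ρ s⁻¹) 1)).charpoly
        = (X - C 1) ^ (2 * Fintype.card n ^ 2) *
            (X - C (1 + (Fintype.card n : K)⁻¹)) ^ (Fintype.card n ^ 2) *
            (X - C (1 - (Fintype.card n : K)⁻¹)) ^ (Fintype.card n ^ 2) ∨
      ((Fintype.card G : K)⁻¹ • ∑ s : G,
          (fromBlocks 1 (ρ s) (ρ s⁻¹) 1) ⊗ₖ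
            (fromBlocks 1 (ρ s) (ρ s⁻¹) 1)).charpoly
        = (X - C 2) * X * (X - C 1) ^ (2 * Fintype.card n ^ 2 - 2) *
            (X - C (1 + (Fintype.card n : K)⁻¹)) ^ (Fintype.card n ^ 2) *
            (X - C (1 - (Fintype.card n : K)⁻¹)) ^ (Fintype.card n ^ 2) := by
  have h_charpoly := charpoly_average_kronecker_fromBlocks (hρirr.average_eq_zero hnontriv)
  rw [hρirr.charpoly_average_kronecker_inv_sq_comp] at h_charpoly
  refine hρirr.charpoly_average_tensorSquare.imp (fun hP => ?_) fun hP => ?_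
  · rw [← average, h_charpoly, hP, X_pow_comp, ← pow_mul, C_1, mul_assoc]
  · have sub_one_sq_sub_one : ((X - 1) ^ 2 - 1 : K[X]) = (X - C 2) * X := by
      rw [C_ofNat]
      ring
    rw [← average, h_charpoly, hP, mul_comp, X_pow_comp, sub_comp, X_comp, one_comp, ← pow_mul,
      Nat.mul_sub, mul_one, sub_one_sq_sub_one, C_1]
    ring

end IrreducibleRepresentation

end

open Kronecker Polynomial in
/-- Spectrum (with multiplicities, encoded by the characteristic polynomial) of the block
`B^{ρ,ρ} = (1/|G|) ∑_s ([[I, ρ(s)],[ρ(s⁻¹), I]])^{⊗2}` for a nontrivial irreducible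
unitary representation `ρ`: either eigenvalues `1` (multiplicity `2d²`) and `1 ± 1/d`
(multiplicity `d²` each), or `2`, `0` (multiplicity `1` each), `1` (multiplicity `2d² − 2`)
and `1 ± 1/d` (multiplicity `d²` each). -/
theorem spectrum_B_rho_rho
    {G : Type*} [Group G] [Fintype G] {d : ℕ}
    (ρ : G →* Matrix (Fin d) (Fin d) ℂ)
    (hρu : ∀ g, ρ g ∈ Matrix.unitaryGroup (Fin d) ℂ)
    (hρirr : ∀ W : Submodule ℂ (Fin d → ℂ),
      (∀ g : G, ∀ v ∈ W, (ρ g).mulVec v ∈ W) → W = ⊥ ∨ W = ⊤)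
    (hnontriv : ∃ g : G, ρ g ≠ 1) :
    ((Fintype.card G : ℂ)⁻¹ • ∑ s : G,
        (Matrix.fromBlocks 1 (ρ s) (ρ s⁻¹) 1) ⊗ₖ
          (Matrix.fromBlocks 1 (ρ s) (ρ s⁻¹) 1)).charpoly
        = (X - C 1) ^ (2 * d ^ 2) * (X - C (1 + (d : ℂ)⁻¹)) ^ (d ^ 2) *
            (X - C (1 - (d : ℂ)⁻¹)) ^ (d ^ 2) ∨
      ((Fintype.card G : ℂ)⁻¹ • ∑ s : G,
          (Matrix.fromBlocks 1 (ρ s) (ρ s⁻¹) 1) ⊗ₖ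
            (Matrix.fromBlocks 1 (ρ s) (ρ s⁻¹) 1)).charpoly
        = (X - C 2) * X * (X - C 1) ^ (2 * d ^ 2 - 2) *
            (X - C (1 + (d : ℂ)⁻¹)) ^ (d ^ 2) * (X - C (1 - (d : ℂ)⁻¹)) ^ (d ^ 2) := by
  simpa only [Fintype.card_fin] using spectrum_B_rho_rho_general hρirr hnontriv
end

section
/- Let G be a finite group. Define γ₁^{(2)} := (1/|G|) ∑_{s∈G} γ₁(s) ⊗ γ₁(s) where γ₁(s) = (1/(2|G|)) [[I, R(s)],[R(s⁻¹), I]]. Then rank γ₁^{(2)} = 4|G|² − 5|G| + 3 − m, where m is the number of one-dimensional irreducible complex representations of G (equivalently, m = |G/[G,G]|). -/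
/-!
Write `n = |G|`. The state `γ₁(s)` is a multiple of the Gram matrix of the vectors
`|0, a⟩ + |1, a s⟩`, so the averaged state is a multiple of `Cᵀ C`, where the rows of `C` are the
tensor squares of these vectors, and its rank is that of `C`. A function on `(G ⊕ G) × (G ⊕ G)` with
blocks `x, y, z, w` is killed by `C` iff `x(a, ua) + y(a, uc) + z(c, ua) + w(c, uc) = 0` for all
`a, c, u`. The mixed difference of `y` then satisfies a twisted 2-cocycle identity; averaging makes
it the coboundary of some `q : G → K`, and a second averaging shows that `q` factors through the
abelianization, which is where `m` comes from. Hence the kernel is parametrized by two functions on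
`G ⊕ G`, one on `G` and one on `Gᵃᵇ`, uniquely up to three constants, and
`rank C = 4 n² - (2 · 2n + n + m - 3)`.
-/

namespace HiddenShift

open Matrix Kronecker

section Gram

variable {ι m n R F L : Type*}

/-- The matrices of a family with common columns placed on top of each other; turns a sum of Gram
matrices into a single Gram matrix. -/
def rowStack (A : ι → Matrix m n R) : Matrix (ι × m) n R :=
  of fun p j => A p.1 p.2 j

lemma transpose_mul_self_rowStack [Fintype ι] [Fintype m] [NonUnitalNonAssocSemiring R]
    (A : ι → Matrix m n R) : (rowStack A)ᵀ * rowStack A = ∑ i, (A i)ᵀ * A i := by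
  ext j k
  simp [rowStack, mul_apply, Matrix.sum_apply, Fintype.sum_prod_type]

lemma span_range_algebraMap_comp [CommSemiring F] [Semiring L] [Algebra F L] (v : ι → m → F) :
    Submodule.span L (Set.range fun i => algebraMap F L ∘ v i) =
      Submodule.span L (Submodule.map ((Algebra.linearMap F L).compLeft m)
        (Submodule.span F (Set.range v)) : Set (m → L)) := by
  rw [Submodule.map_span, Submodule.span_span_of_tower, ← Set.range_comp]
  rfl

lemma rank_map_algebraMap [Finite m] [Fintype n] [Field F] [Field L] [Algebra F L]
    (A : Matrix m n F) : (A.map (algebraMap F L)).rank = A.rank := by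
  obtain ⟨κ, e, he, hspan, hli⟩ := exists_linearIndependent' F A.col
  have : Finite κ := Finite.of_injective e he
  have := Fintype.ofFinite κ
  have hli' : LinearIndependent L fun k => algebraMap F L ∘ (A.col ∘ e) k :=
    linearIndependent_algebraMap_comp_iff.2 hli
  rw [rank_eq_finrank_span_cols, rank_eq_finrank_span_cols, ← hspan, finrank_span_eq_card hli,
    ← finrank_span_eq_card hli', span_range_algebraMap_comp, hspan, ← span_range_algebraMap_comp]
  rfl

lemma rank_transpose_mul_self_map [Fintype m] [Fintype n] [Field F] [LinearOrder F]
    [IsStrictOrderedRing F] [Field L] [Algebra F L] (A : Matrix m n F) :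
    ((A.map (algebraMap F L))ᵀ * A.map (algebraMap F L)).rank =
      (A.map (algebraMap F L)).rank := by
  rw [← transpose_map, ← Matrix.map_mul, rank_map_algebraMap, rank_map_algebraMap,
    rank_transpose_mul_self]

end Gram

section Vectors

variable {K G : Type*} [Group G] [DecidableEq G]

variable (K) in
/-- The right regular representation `R(s)`, in the convention `R(s) |a s⟩ = |a⟩`. -/
def rightRegular [Zero K] [One K] (s : G) : Matrix G G K :=
  of fun h g => if g = h * s then 1 else 0

lemma rightRegular_eq_permMatrix [Zero K] [One K] (s : G) :
    rightRegular K s = (Equiv.mulRight s).permMatrix K := by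
  ext h g
  simp [rightRegular, PEquiv.toMatrix_apply, eq_comm]

lemma transpose_rightRegular [Zero K] [One K] (s : G) :
    (rightRegular K s)ᵀ = rightRegular K s⁻¹ := by
  simp [rightRegular_eq_permMatrix]

lemma transpose_mul_self_rightRegular [Fintype G] [NonAssocSemiring K] (s : G) :
    (rightRegular K s)ᵀ * rightRegular K s = 1 := by
  rw [rightRegular_eq_permMatrix, transpose_permMatrix, ← permMatrix_mul, mul_inv_cancel,
    permMatrix_one]

variable (K) in
/-- The matrix whose row `a` is the unnormalized superposition `|0, a⟩ + |1, a s⟩`. -/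
def shiftVectors [Zero K] [One K] (s : G) : Matrix G (G ⊕ G) K :=
  fromCols 1 (rightRegular K s)

lemma transpose_mul_self_shiftVectors [Fintype G] [Semiring K] (s : G) :
    (shiftVectors K s)ᵀ * shiftVectors K s =
      fromBlocks 1 (rightRegular K s) (rightRegular K s⁻¹) 1 := by
  rw [shiftVectors, transpose_fromCols, fromRows_mul_fromCols, transpose_mul_self_rightRegular,
    transpose_rightRegular]
  simp

variable (K G) in
/-- The matrix with rows `(|0, a⟩ + |1, a s⟩) ⊗ (|0, b⟩ + |1, b s⟩)`, indexed by `(s, a, b)`. -/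
def shiftPairs [MulZeroOneClass K] : Matrix (G × G × G) ((G ⊕ G) × (G ⊕ G)) K :=
  rowStack fun s => shiftVectors K s ⊗ₖ shiftVectors K s

lemma shiftPairs_map {L : Type*} [NonAssocSemiring K] [NonAssocSemiring L] (φ : K →+* L) :
    (shiftPairs K G).map φ = shiftPairs L G := by
  ext ⟨s, a, b⟩ ⟨i | i, j | j⟩ <;>
    simp [shiftPairs, rowStack, shiftVectors, rightRegular, one_apply, apply_ite φ]

lemma transpose_mul_self_shiftPairs [Fintype G] [CommSemiring K] :
    (shiftPairs K G)ᵀ * shiftPairs K G =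
      ∑ s : G, ((shiftVectors K s)ᵀ * shiftVectors K s) ⊗ₖ
        ((shiftVectors K s)ᵀ * shiftVectors K s) := by
  rw [shiftPairs, transpose_mul_self_rowStack]
  simp only [mul_kronecker_mul, kroneckerMap_transpose]

lemma shiftPairs_mulVec [Fintype G] [NonAssocSemiring K] (f : (G ⊕ G) × (G ⊕ G) → K) (s a b : G) :
    (shiftPairs K G *ᵥ f) (s, a, b) =
      f (.inl a, .inl b) + f (.inl a, .inr (b * s)) +
        (f (.inr (a * s), .inl b) + f (.inr (a * s), .inr (b * s))) := by
  rw [add_add_add_comm]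
  simp [shiftPairs, rowStack, shiftVectors, rightRegular, mulVec, dotProduct, one_apply,
    Fintype.sum_prod_type, Finset.sum_add_distrib]

lemma mem_ker_shiftPairs [Fintype G] [CommSemiring K] {f : (G ⊕ G) × (G ⊕ G) → K} :
    f ∈ LinearMap.ker (shiftPairs K G).mulVecLin ↔
      ∀ a c u, f (.inl a, .inl (u * a)) + f (.inl a, .inr (u * c)) +
        (f (.inr c, .inl (u * a)) + f (.inr c, .inr (u * c))) = 0 := by
  rw [LinearMap.mem_ker, mulVecLin_apply]
  constructor
  · intro h a c u
    simpa [mul_assoc] using (shiftPairs_mulVec f (a⁻¹ * c) a (u * a)).symm.trans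
      (congrFun h (a⁻¹ * c, a, u * a))
  · intro h
    ext ⟨s, a, b⟩
    simpa [shiftPairs_mulVec, mul_assoc] using h a (a * s) (b * a⁻¹)

end Vectors

section Averaging

lemma card_nsmul_eq_zero_of_comp_perm_eq_add {ι M : Type*} [Fintype ι] [AddCancelCommMonoid M]
    {φ : ι → M} {σ : Equiv.Perm ι} {c : M} (h : ∀ i, φ (σ i) = φ i + c) :
    Fintype.card ι • c = 0 := by
  have hsum := Equiv.sum_comp σ φ
  simpa [h, Finset.sum_add_distrib] using hsum

lemma eq_zero_of_comp_perm_eq_add {ι R : Type*} [Fintype ι] [Ring R] [NoZeroDivisors R]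
    [NeZero (Fintype.card ι : R)] {φ : ι → R} {σ : Equiv.Perm ι} {c : R}
    (h : ∀ i, φ (σ i) = φ i + c) : c = 0 := by
  have hc := card_nsmul_eq_zero_of_comp_perm_eq_add h
  rw [nsmul_eq_mul] at hc
  exact (mul_eq_zero.1 hc).resolve_left (NeZero.ne _)

variable {K G : Type*} [Group G] [Fintype G] [Ring K] [NoZeroDivisors K]
  [NeZero (Fintype.card G : K)]

lemma apply_eq_apply_one_of_mul_inv_eq_add {p α β : G → K}
    (h : ∀ a b, p (b * a⁻¹) = α a + β b) (g : G) :
    p g = p 1 ∧ α g = α 1 ∧ β g = β 1 := by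
  have hshift (a b) : α (a * g) + β (b * g) = α a + β b := by
    rw [← h, ← h]
    group
  have hβ : β 1 - β g = 0 := by
    refine eq_zero_of_comp_perm_eq_add (φ := α) (σ := Equiv.mulRight g) fun a => ?_
    have := hshift a 1
    rw [one_mul] at this
    rw [Equiv.coe_mulRight, add_sub, ← this, add_sub_cancel_right]
  have hβ' : β g = β 1 := (sub_eq_zero.1 hβ).symm
  have hα : α g = α 1 := by simpa [hβ'] using hshift 1 1
  refine ⟨?_, hα, hβ'⟩
  have h1 := h 1 1
  have hg := h 1 g
  simp only [inv_one, mul_one] at h1 hg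
  rw [h1, hg, hβ']

lemma apply_mul_comm_of_sub_eq_sub {q : G → K}
    (h : ∀ c u a, q (c * u * a) - q (u * c * a) = q (c * u) - q (u * c)) (c u a : G) :
    q (c * u * a) = q (u * c * a) := by
  rw [← sub_eq_zero, h]
  refine eq_zero_of_comp_perm_eq_add (φ := q) (σ := Equiv.mulLeft (c * u * (u * c)⁻¹)) fun g => ?_
  rw [← h c u ((u * c)⁻¹ * g)]
  simp [mul_assoc]

end Averaging

lemma abelianizationOf_mul_mul_left_comm {G : Type*} [Group G] (a u c : G) :
    Abelianization.of (a * (u * c)) = Abelianization.of (u * a * c) := by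
  simp only [map_mul, mul_left_comm, mul_assoc]

lemma factorsThrough_abelianizationOf {G X : Type*} [Group G] {q : G → X}
    (h : ∀ c u a, q (c * u * a) = q (u * c * a)) :
    q.FactorsThrough (Abelianization.of (G := G)) := by
  let H : Subgroup G :=
    { carrier := {k | ∀ g, q (k * g) = q g}
      one_mem' := by simp
      mul_mem' := fun ha hb g => by rw [mul_assoc, ha, hb]
      inv_mem' := fun {a} ha g => by rw [← ha, mul_inv_cancel_left] }
  have hH : commutator G ≤ H := by
    rw [commutator_def, Subgroup.commutator_le]
    intro c _ u _ g
    simpa [commutatorElement_def, mul_assoc] using h c u (c⁻¹ * u⁻¹ * g)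
  intro g g' hg
  have hmem : g * g'⁻¹ ∈ commutator G := by
    rw [← Abelianization.ker_of, MonoidHom.mem_ker, map_mul, map_inv, hg, mul_inv_cancel]
  simpa using hH hmem g'

lemma exists_coboundary_of_cocycle {K G : Type*} [Group G] [Fintype G] [Field K]
    [NeZero (Fintype.card G : K)] {Y : G → G → K}
    (h : ∀ a c u, Y (u * a) c + Y a u = Y a (u * c) + Y u c) :
    ∃ q : G → K, ∀ a u, Y a u = q (u * a) - q a - q u := by
  refine ⟨fun a => -(Fintype.card G : K)⁻¹ * ∑ c, Y a c, fun a u => ?_⟩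
  have hshift : ∑ c, Y a (u * c) = ∑ c, Y a c := Equiv.sum_comp (Equiv.mulLeft u) (Y a)
  have hsum : ∑ c, Y (u * a) c + Fintype.card G * Y a u = ∑ c, Y a c + ∑ c, Y u c := by
    simpa [Finset.sum_add_distrib, hshift] using Fintype.sum_congr _ _ fun c => h a c u
  have hcard : (Fintype.card G : K) ≠ 0 := NeZero.ne _
  field_simp
  linear_combination hsum

lemma exists_abelianization_coboundary_of_cocycle {K G : Type*} [Group G] [Fintype G] [Field K]
    [NeZero (Fintype.card G : K)] {Y : G → G → K}
    (h : ∀ a c u, Y (u * a) c + Y a u = Y a (u * c) + Y u c) :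
    ∃ q : Abelianization G → K, ∀ a u, Y a u = q (.of (a * u)) - q (.of a) - q (.of u) := by
  obtain ⟨q, hq⟩ := exists_coboundary_of_cocycle h
  have hcomm : ∀ c u a, q (c * u * a) = q (u * c * a) :=
    apply_mul_comm_of_sub_eq_sub fun c u a => by
      have := h a c u
      simp only [hq, ← mul_assoc] at this
      linear_combination this
  obtain ⟨r, hr⟩ := (Function.factorsThrough_iff q).1 (factorsThrough_abelianizationOf hcomm)
  refine ⟨r, fun a u => ?_⟩
  simpa [hr, mul_comm] using hq a u

section Kernel

variable {K G : Type*} [Group G]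

lemma exists_cross_blocks [Fintype G] [Field K] [NeZero (Fintype.card G : K)]
    {x y z w : G → G → K}
    (h : ∀ a c u, x a (u * a) + y a (u * c) + (z c (u * a) + w c (u * c)) = 0) :
    ∃ (α β γ δ : G → K) (q : Abelianization G → K),
      (∀ a d, y a d = α a - δ d + q (.of (a * d))) ∧
        ∀ c b, z c b = β b - γ c - q (.of (b * c)) := by
  let mixedDiff (v : G → G → K) (a d : G) : K := v a d - v 1 d - v a 1 + v 1 1
  have hyz (a c u) :
      mixedDiff y a (u * c) - mixedDiff y a u + (mixedDiff z c (u * a) - mixedDiff z c u) = 0 := by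
    have h₁ := h 1 c u
    have h₂ := h a 1 u
    have h₃ := h 1 1 u
    simp only [mul_one] at h₁ h₂ h₃
    linear_combination h a c u - h₁ - h₂ + h₃
  have hzy (a c) : mixedDiff z c a = -mixedDiff y a c := by
    have := hyz a c 1
    simp only [one_mul, mixedDiff] at this ⊢
    linear_combination this
  obtain ⟨q, hq⟩ := exists_abelianization_coboundary_of_cocycle (Y := mixedDiff y)
    fun a c u => by
      have := hyz a c u
      rw [hzy, hzy] at this
      linear_combination -this
  refine ⟨fun a => y a 1 - q (.of a), fun b => z 1 b + q (.of b),
    fun c => z 1 1 - z c 1 - q (.of c), fun d => y 1 1 - y 1 d + q (.of d), q,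
    fun a d => ?_, fun c b => ?_⟩
  · linear_combination hq a d
  · linear_combination hzy b c - hq b c

lemma exists_diagonal_blocks [CommRing K] {x y z w : G → G → K}
    (h : ∀ a c u, x a (u * a) + y a (u * c) + (z c (u * a) + w c (u * c)) = 0)
    {α β γ δ : G → K} {q : Abelianization G → K}
    (hy : ∀ a d, y a d = α a - δ d + q (.of (a * d)))
    (hz : ∀ c b, z c b = β b - γ c - q (.of (b * c))) :
    ∃ p : G → K, (∀ a b, x a b = -α a - β b + p (b * a⁻¹)) ∧
      ∀ c d, w c d = γ c + δ d - p (d * c⁻¹) := by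
  have hxw (a c u) :
      x a (u * a) + α a + β (u * a) = -(w c (u * c) - γ c - δ (u * c)) := by
    have := h a c u
    rw [hy, hz, abelianizationOf_mul_mul_left_comm] at this
    linear_combination this
  refine ⟨fun u => x 1 u + α 1 + β u, fun a b => ?_, fun c d => ?_⟩
  · have h₁ := hxw 1 1 (b * a⁻¹)
    have h₂ := hxw a 1 (b * a⁻¹)
    simp only [inv_mul_cancel_right, mul_one] at h₁ h₂ ⊢
    linear_combination h₂ - h₁
  · have := hxw 1 c (d * c⁻¹)
    simp only [inv_mul_cancel_right, mul_one] at this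
    linear_combination this

variable (K G) in
/-- The parameters of a kernel vector of `shiftPairs`: two functions on `G ⊕ G`, one on `G` and one
on the abelianization. -/
abbrev KernelParams : Type _ :=
  (G ⊕ G → K) × (G ⊕ G → K) × (G → K) × (Abelianization G → K)

/-- The kernel vector with given parameters. With `ε = |1⟩ - |0⟩` summed over `G`, the parts in `l`
and `r` are `l ⊗ ε` and `ε ⊗ r`; `p` enters the diagonal blocks and `q` the off-diagonal ones. -/
def kernelVector [CommRing K] : KernelParams K G →ₗ[K] ((G ⊕ G) × (G ⊕ G) → K) where
  toFun
    | (l, r, p, q) => fun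
      | (.inl a, .inl b) => -l (.inl a) - r (.inl b) + p (b * a⁻¹)
      | (.inl a, .inr d) => l (.inl a) - r (.inr d) + q (.of (a * d))
      | (.inr c, .inl b) => r (.inl b) - l (.inr c) - q (.of (b * c))
      | (.inr c, .inr d) => l (.inr c) + r (.inr d) - p (d * c⁻¹)
  map_add' := by
    rintro ⟨l, r, p, q⟩ ⟨l', r', p', q'⟩
    ext ⟨_ | _, _ | _⟩ <;> simp only [Pi.add_apply] <;> ring
  map_smul' _ _ := by
    ext ⟨_ | _, _ | _⟩ <;>
      simp only [Prod.smul_fst, Prod.smul_snd, Pi.smul_apply, smul_eq_mul, RingHom.id_apply] <;>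
      ring

lemma range_kernelVector [Fintype G] [DecidableEq G] [Field K] [NeZero (Fintype.card G : K)] :
    LinearMap.range (kernelVector (K := K) (G := G)) =
      LinearMap.ker (shiftPairs K G).mulVecLin := by
  ext f
  rw [mem_ker_shiftPairs]
  constructor
  · rintro ⟨⟨l, r, p, q⟩, rfl⟩ a c u
    simp only [kernelVector, LinearMap.coe_mk, AddHom.coe_mk, mul_inv_cancel_right,
      abelianizationOf_mul_mul_left_comm a u c]
    ring
  · intro h
    obtain ⟨α, β, γ, δ, q, hy, hz⟩ := exists_cross_blocks (x := fun a b => f (.inl a, .inl b))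
      (y := fun a d => f (.inl a, .inr d)) (z := fun c b => f (.inr c, .inl b))
      (w := fun c d => f (.inr c, .inr d)) h
    obtain ⟨p, hx, hw⟩ := exists_diagonal_blocks (x := fun a b => f (.inl a, .inl b))
      (w := fun c d => f (.inr c, .inr d)) h hy hz
    refine ⟨(Sum.elim α γ, Sum.elim β δ, p, q), ?_⟩
    ext ⟨a | c, b | d⟩
    · exact (hx a b).symm
    · exact (hy a d).symm
    · exact (hz c b).symm
    · exact (hw c d).symm

/-- The parameters of the zero vector: all functions are constant on each copy of `G`, and three of
the six constants determine the others. -/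
def constantParams [CommRing K] : K × K × K →ₗ[K] KernelParams K G where
  toFun
    | (a, b, c) => (Sum.elim (fun _ => b) fun _ => a - b - c,
        Sum.elim (fun _ => a - b) fun _ => b + c, fun _ => a, fun _ => c)
  map_add' _ _ := by
    refine Prod.ext ?_ <| Prod.ext ?_ rfl <;> ext (_ | _) <;>
      simp only [Prod.fst_add, Prod.snd_add, Pi.add_apply, Sum.elim_inl, Sum.elim_inr] <;> ring
  map_smul' _ _ := by
    refine Prod.ext ?_ <| Prod.ext ?_ rfl <;> ext (_ | _) <;>
      simp only [Prod.smul_fst, Prod.smul_snd, Pi.smul_apply, smul_eq_mul, RingHom.id_apply,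
        Sum.elim_inl, Sum.elim_inr] <;> ring

lemma constantParams_injective [CommRing K] :
    Function.Injective (constantParams (K := K) (G := G)) := by
  rintro ⟨a, b, c⟩ ⟨a', b', c'⟩ h
  simp only [constantParams, LinearMap.coe_mk, AddHom.coe_mk, Prod.mk.injEq] at h
  obtain ⟨hl, -, hp, hq⟩ := h
  rw [congrFun hp 1, congrFun hq 1, show b = b' from congrFun hl (.inl 1)]

lemma exists_constantParams_eq_of_kernelVector_eq_zero [Fintype G] [CommRing K] [NoZeroDivisors K]
    [NeZero (Fintype.card G : K)] {l r : G ⊕ G → K} {p : G → K} {q : Abelianization G → K}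
    (h : kernelVector (l, r, p, q) = 0) : ∃ t, constantParams t = (l, r, p, q) := by
  have hx (a b) : -l (.inl a) - r (.inl b) + p (b * a⁻¹) = 0 := congrFun h (.inl a, .inl b)
  have hy (a d) : l (.inl a) - r (.inr d) + q (.of (a * d)) = 0 := congrFun h (.inl a, .inr d)
  have hz (c b) : r (.inl b) - l (.inr c) - q (.of (b * c)) = 0 := congrFun h (.inr c, .inl b)
  have hw (c d) : l (.inr c) + r (.inr d) - p (d * c⁻¹) = 0 := congrFun h (.inr c, .inr d)
  have hinl := apply_eq_apply_one_of_mul_inv_eq_add (p := p) (α := fun a => l (.inl a))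
    (β := fun b => r (.inl b)) fun a b => by linear_combination hx a b
  have hinr := apply_eq_apply_one_of_mul_inv_eq_add (p := p) (α := fun c => l (.inr c))
    (β := fun d => r (.inr d)) fun c d => by linear_combination -hw c d
  have h₁ := hx 1 1
  have h₂ := hy 1 1
  have h₃ := hz 1 1
  simp only [inv_one, mul_one, map_one] at h₁ h₂ h₃
  refine ⟨(p 1, l (.inl 1), q 1), Prod.ext ?_ <| Prod.ext ?_ <| Prod.ext ?_ ?_⟩
  · ext (g | g)
    · exact (hinl g).2.1.symm
    · change p 1 - l (.inl 1) - q 1 = l (.inr g)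
      linear_combination h₁ + h₃ - (hinr g).2.1
  · ext (g | g)
    · change p 1 - l (.inl 1) = r (.inl g)
      linear_combination h₁ - (hinl g).2.2
    · change l (.inl 1) + q 1 = r (.inr g)
      linear_combination h₂ - (hinr g).2.2
  · ext g
    exact (hinl g).1.symm
  · ext g
    obtain ⟨g, rfl⟩ := QuotientGroup.mk_surjective g
    have := hy 1 g
    rw [one_mul] at this
    change q 1 = q (.of g)
    linear_combination h₂ - this - (hinr g).2.2

lemma range_constantParams [Fintype G] [CommRing K] [NoZeroDivisors K]
    [NeZero (Fintype.card G : K)] :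
    LinearMap.range (constantParams (K := K) (G := G)) = LinearMap.ker kernelVector := by
  ext ⟨l, r, p, q⟩
  rw [LinearMap.mem_ker]
  refine ⟨?_, exists_constantParams_eq_of_kernelVector_eq_zero⟩
  rintro ⟨⟨a, b, c⟩, h⟩
  rw [← h]
  ext ⟨_ | _, _ | _⟩ <;>
    simp only [kernelVector, constantParams, LinearMap.coe_mk, AddHom.coe_mk, Sum.elim_inl,
      Sum.elim_inr, Pi.zero_apply] <;> ring

end Kernel

section Rank

variable {K G : Type*} [Group G] [Fintype G] [DecidableEq G] [Field K]

lemma finrank_ker_shiftPairs [NeZero (Fintype.card G : K)] :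
    Module.finrank K (LinearMap.ker (shiftPairs K G).mulVecLin) + 3 =
      5 * Fintype.card G + (commutator G).index := by
  have := Fintype.ofFinite (Abelianization G)
  have hindex : (commutator G).index = Fintype.card (Abelianization G) := by
    rw [← Nat.card_eq_fintype_card]
    rfl
  have hkernel := (kernelVector (K := K) (G := G)).finrank_range_add_finrank_ker
  have hconst := LinearMap.finrank_range_of_inj (constantParams_injective (K := K) (G := G))
  rw [range_constantParams] at hconst
  rw [range_kernelVector, hconst] at hkernel
  simp only [Module.finrank_prod, Module.finrank_fintype_fun_eq_card, Module.finrank_self,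
    Fintype.card_sum] at hkernel
  omega

lemma rank_shiftPairs [NeZero (Fintype.card G : K)] :
    ((shiftPairs K G).rank : ℤ) =
      4 * (Fintype.card G : ℤ) ^ 2 - 5 * Fintype.card G + 3 - (commutator G).index := by
  have hrank := (shiftPairs K G).mulVecLin.finrank_range_add_finrank_ker
  have hker := finrank_ker_shiftPairs (K := K) (G := G)
  simp only [Module.finrank_fintype_fun_eq_card, Fintype.card_prod, Fintype.card_sum] at hrank
  rw [Matrix.rank]
  zify at hrank hker
  linear_combination hrank - hker

variable (K) in
/-- The state `γ₁(s)`, with entries in an arbitrary field `K`. -/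
def hiddenShiftState (s : G) : Matrix (G ⊕ G) (G ⊕ G) K :=
  (2 * (Fintype.card G : K))⁻¹ • fromBlocks 1 (rightRegular K s) (rightRegular K s⁻¹) 1

lemma sum_hiddenShiftState_kronecker_self :
    ∑ s : G, hiddenShiftState K s ⊗ₖ hiddenShiftState K s =
      ((2 * (Fintype.card G : K))⁻¹ * (2 * (Fintype.card G : K))⁻¹) •
        ((shiftPairs K G)ᵀ * shiftPairs K G) := by
  simp only [hiddenShiftState, smul_kronecker, kronecker_smul, smul_smul, ← Finset.smul_sum,
    transpose_mul_self_shiftPairs, transpose_mul_self_shiftVectors]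

lemma rank_transpose_mul_self_shiftPairs [CharZero K] :
    ((shiftPairs K G)ᵀ * shiftPairs K G).rank = (shiftPairs K G).rank := by
  rw [← shiftPairs_map (algebraMap ℚ K), rank_transpose_mul_self_map]

end Rank

end HiddenShift

open Kronecker HiddenShift in
theorem rank_averaged_hidden_shift_state_two_general {K G : Type*} [Group G] [Fintype G]
    [DecidableEq G] [Field K] [CharZero K] :
    (((Fintype.card G : K)⁻¹ •
      ∑ s : G, hiddenShiftState K s ⊗ₖ hiddenShiftState K s).rank : ℤ) =
      4 * (Fintype.card G : ℤ) ^ 2 - 5 * Fintype.card G + 3 - (commutator G).index := by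
  have hcard : (Fintype.card G : K) ≠ 0 := Nat.cast_ne_zero.2 Fintype.card_ne_zero
  have : NeZero (Fintype.card G : K) := ⟨hcard⟩
  rw [sum_hiddenShiftState_kronecker_self, smul_smul,
    Matrix.rank_smul_of_mem_nonZeroDivisors _ (mem_nonZeroDivisors_of_ne_zero (by simp [hcard])),
    rank_transpose_mul_self_shiftPairs, rank_shiftPairs]

open Kronecker in
/-- The rank of the k = 2 averaged hidden shift state
`γ₁^{(2)} = (1/|G|) ∑_s γ₁(s) ⊗ γ₁(s)` equals `4|G|² − 5|G| + 3 − m`,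
where `m` is the number of one-dimensional irreducible complex representations of `G`,
i.e. the index of the commutator subgroup. -/
theorem rank_averaged_hidden_shift_state_two
    {G : Type*} [Group G] [Fintype G] [DecidableEq G] :
    ((((Fintype.card G : ℂ))⁻¹ • ∑ s : G,
        ((2 * (Fintype.card G : ℂ))⁻¹ •
          Matrix.fromBlocks 1
            (Matrix.of fun h g : G => if g = h * s then (1 : ℂ) else 0)
            (Matrix.of fun h g : G => if g = h * s⁻¹ then (1 : ℂ) else 0) 1) ⊗ₖ
        ((2 * (Fintype.card G : ℂ))⁻¹ •
          Matrix.fromBlocks 1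
            (Matrix.of fun h g : G => if g = h * s then (1 : ℂ) else 0)
            (Matrix.of fun h g : G => if g = h * s⁻¹ then (1 : ℂ) else 0) 1)).rank : ℤ)
      = 4 * (Fintype.card G : ℤ) ^ 2 - 5 * (Fintype.card G : ℤ) + 3
          - ((commutator G).index : ℤ) :=
  rank_averaged_hidden_shift_state_two_general
end

section
/- Let G be a finite group, H ≤ G a subgroup, and suppose the hidden shift s is drawn uniformly from H. Then the state (1/|H|) ∑_{h∈H} ((1/|G|) ∑_{g∈G} |φ_{h,g}⟩⟨φ_{h,g}|), with |φ_{s,g}⟩ := (|0,g⟩+|1,gs⟩)/√2, is unitarily equivalent to the tensor product of the averaged hidden shift state for the group H with the maximally mixed state of dimension |G|/|H| (i.e., it equals a direct sum over cosets of |G|/|H| copies of the H hidden shift state). -/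
/-!
A left transversal of `H` identifies `G` with `H × G ⧸ H` so that right multiplication by `h : H`
acts on the first factor only. Along this relabelling of the basis, `|φ_{h,g}⟩` becomes
`|φ_{h,h'}⟩ ⊗ |q⟩` when `g` corresponds to `(h', q)`, and the projections `|q⟩⟨q|` sum to the
identity. Hence the state of each single shift `h ∈ H` already splits off a maximally mixed factor,
along a relabelling independent of `h`, and the claim follows by linearity.
-/

section Kronecker

open Matrix Kronecker

theorem vecMulVec_mul_eq_kronecker {m n p q R : Type*} [CommSemigroup R]
    (u : m → R) (w : p → R) (v : n → R) (z : q → R) :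
    vecMulVec (fun i : m × p => u i.1 * w i.2) (fun j : n × q => v j.1 * z j.2) =
      vecMulVec u v ⊗ₖ vecMulVec w z := by
  ext i j
  exact mul_mul_mul_comm _ _ _ _

theorem sum_kronecker_sum {ι κ m n p q R : Type*} [Fintype ι] [Fintype κ]
    [NonUnitalNonAssocSemiring R] (A : ι → Matrix m n R) (B : κ → Matrix p q R) :
    (∑ i, A i) ⊗ₖ (∑ k, B k) = ∑ x : ι × κ, A x.1 ⊗ₖ B x.2 := by
  ext i j
  simp only [kroneckerMap_apply, Matrix.sum_apply, Fintype.sum_mul_sum, Fintype.sum_prod_type]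

end Kronecker

section HiddenShiftStates

open Matrix Kronecker

variable {α β κ : Type*}

/-- The vector `(|0, x⟩ + |1, y⟩) / √2` of `ℂ² ⊗ ℂ[α]`, whose basis is encoded as `α ⊕ α`. For
`x = g` and `y = g * s` it is `|φ_{s,g}⟩`. -/
noncomputable def shiftVec [DecidableEq α] (x y : α) : α ⊕ α → ℂ :=
  Sum.elim (fun a => if a = x then ((Real.sqrt 2 : ℂ))⁻¹ else 0)
    fun a => if a = y then ((Real.sqrt 2 : ℂ))⁻¹ else 0

/-- The pure state `|ψ⟩⟨ψ|` of the vector `ψ = (|0, x⟩ + |1, y⟩) / √2`. -/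
noncomputable def shiftProj [DecidableEq α] (x y : α) : Matrix (α ⊕ α) (α ⊕ α) ℂ :=
  vecMulVec (shiftVec x y) (star (shiftVec x y))

/-- The hidden shift state `(1/|α|) ∑ g, |φ_{s,g}⟩⟨φ_{s,g}|` of the shift `s`. -/
noncomputable def hiddenShiftState [Fintype α] [DecidableEq α] [Mul α] (s : α) :
    Matrix (α ⊕ α) (α ⊕ α) ℂ :=
  (Fintype.card α : ℂ)⁻¹ • ∑ g, shiftProj g (g * s)

/-- The averaged hidden shift state `γ₁ = (1/|α|²) ∑ h h', |φ_{h,h'}⟩⟨φ_{h,h'}|`, where the shift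
is uniformly distributed. -/
noncomputable def averagedHiddenShiftState (α : Type*) [Fintype α] [DecidableEq α] [Mul α] :
    Matrix (α ⊕ α) (α ⊕ α) ℂ :=
  ((Fintype.card α : ℂ) ^ 2)⁻¹ • ∑ h : α, ∑ h' : α, shiftProj h' (h' * h)

/-- The maximally mixed state on `ℂ[κ]`. -/
noncomputable def maximallyMixedState (κ : Type*) [Fintype κ] [DecidableEq κ] : Matrix κ κ ℂ :=
  (Fintype.card κ : ℂ)⁻¹ • 1

theorem averagedHiddenShiftState_eq_sum [Fintype α] [DecidableEq α] [Mul α] :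
    averagedHiddenShiftState α = ∑ h : α, (Fintype.card α : ℂ)⁻¹ • hiddenShiftState h := by
  simp only [averagedHiddenShiftState, hiddenShiftState, ← Finset.smul_sum, smul_smul, pow_two,
    mul_inv]

/-- The identification of the basis of `ℂ² ⊗ ℂ[α]` with that of `(ℂ² ⊗ ℂ[β]) ⊗ ℂ[κ]` induced by
`α ≃ β × κ`. -/
def qubitRegisterEquiv (f : α ≃ β × κ) : α ⊕ α ≃ (β ⊕ β) × κ :=
  (f.sumCongr f).trans (Equiv.sumProdDistrib β β κ).symm

theorem shiftVec_eq_mul_single_comp [DecidableEq α] [DecidableEq β] [DecidableEq κ]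
    (f : α ≃ β × κ) {x y : α} (hxy : (f y).2 = (f x).2) :
    shiftVec x y =
      (fun p : (β ⊕ β) × κ =>
        shiftVec (f x).1 (f y).1 p.1 * (Pi.single (f x).2 1 : κ → ℂ) p.2) ∘
        qubitRegisterEquiv f := by
  have eq_iff (a b : α) : a = b ↔ (f a).1 = (f b).1 ∧ (f a).2 = (f b).2 := by
    rw [← f.injective.eq_iff, Prod.ext_iff]
  funext v
  rcases v with a | a <;>
    simp [shiftVec, qubitRegisterEquiv, eq_iff a, hxy, Pi.single_apply, ← ite_and, and_comm]

theorem shiftProj_eq_reindex_kronecker_single [DecidableEq α] [DecidableEq β] [DecidableEq κ]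
    (f : α ≃ β × κ) {x y : α} (hxy : (f y).2 = (f x).2) :
    shiftProj x y =
      reindex (qubitRegisterEquiv f).symm (qubitRegisterEquiv f).symm
        (shiftProj (f x).1 (f y).1 ⊗ₖ single (f x).2 (f x).2 1) := by
  have star_tensor (u : β ⊕ β → ℂ) (q : κ) :
      (star fun p : (β ⊕ β) × κ => u p.1 * (Pi.single q 1 : κ → ℂ) p.2) =
        fun p => star u p.1 * (Pi.single q 1 : κ → ℂ) p.2 := by
    funext p
    simp [Pi.single_apply, apply_ite (starRingEnd ℂ)]
  rw [single_eq_single_vecMulVec_single, shiftProj, shiftProj, ← vecMulVec_mul_eq_kronecker,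
    ← star_tensor, shiftVec_eq_mul_single_comp f hxy]
  rfl

theorem hiddenShiftState_eq_reindex_kronecker [Fintype α] [DecidableEq α] [Mul α]
    [Fintype β] [DecidableEq β] [Mul β] [Fintype κ] [DecidableEq κ]
    (f : α ≃ β × κ) {s : α} {t : β} (hf : ∀ g, f (g * s) = ((f g).1 * t, (f g).2)) :
    hiddenShiftState s =
      reindex (qubitRegisterEquiv f).symm (qubitRegisterEquiv f).symm
        (hiddenShiftState t ⊗ₖ maximallyMixedState κ) := by
  let R := reindexLinearEquiv ℂ ℂ (qubitRegisterEquiv f).symm (qubitRegisterEquiv f).symm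
  have sum_shiftProj : ∑ g, shiftProj g (g * s) = R ((∑ b, shiftProj b (b * t)) ⊗ₖ 1) :=
    calc
      ∑ g, shiftProj g (g * s) =
          ∑ g, R (shiftProj (f g).1 ((f g).1 * t) ⊗ₖ single (f g).2 (f g).2 1) := by
        refine Finset.sum_congr rfl fun g _ => ?_
        rw [shiftProj_eq_reindex_kronecker_single f (by rw [hf g]), hf g]
        rfl
      _ = R (∑ x : β × κ, shiftProj x.1 (x.1 * t) ⊗ₖ single x.2 x.2 1) := by
        rw [← map_sum, f.sum_comp fun x => shiftProj x.1 (x.1 * t) ⊗ₖ single x.2 x.2 (1 : ℂ)]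
      _ = R ((∑ b, shiftProj b (b * t)) ⊗ₖ 1) := by
        rw [← sum_kronecker_sum (fun b => shiftProj b (b * t)) fun k => single k k (1 : ℂ),
          sum_single_one]
  have card_inv : (Fintype.card α : ℂ)⁻¹ = (Fintype.card κ : ℂ)⁻¹ * (Fintype.card β : ℂ)⁻¹ := by
    rw [Fintype.card_congr f, Fintype.card_prod, Nat.cast_mul, _root_.mul_inv_rev]
  rw [hiddenShiftState, hiddenShiftState, maximallyMixedState, kronecker_smul, smul_kronecker,
    smul_smul, ← card_inv, sum_shiftProj, ← map_smul]
  rfl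

end HiddenShiftStates

theorem exists_equiv_prod_quotient_mul_right {G : Type*} [Group G] (H : Subgroup G) :
    ∃ f : G ≃ H × (G ⧸ H), ∀ (g : G) (h : H), f (g * h) = ((f g).1 * h, (f g).2) := by
  obtain ⟨S, hS, -⟩ := H.exists_isComplement_left 1
  refine ⟨hS.equiv.trans <| (Equiv.prodComm S H).trans <|
    (Equiv.refl H).prodCongr hS.leftQuotientEquiv.symm, fun g h => ?_⟩
  simp [hS.equiv_mul_right]

open Matrix Kronecker in
theorem restricted_hidden_shift_state_tensor_decomposition_general
    {G : Type*} [Group G] [Fintype G] [DecidableEq G]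
    (H : Subgroup G) [Fintype H] [Fintype (G ⧸ H)] [DecidableEq (G ⧸ H)] :
    ∃ e : (G ⊕ G) ≃ ((H ⊕ H) × (G ⧸ H)), ∀ w : H → ℂ,
      ∑ h : H, w h • hiddenShiftState (h : G) =
        reindex e.symm e.symm
          ((∑ h : H, w h • hiddenShiftState h) ⊗ₖ maximallyMixedState (G ⧸ H)) := by
  obtain ⟨f, hf⟩ := exists_equiv_prod_quotient_mul_right H
  refine ⟨qubitRegisterEquiv f, fun w => ?_⟩
  simp_rw [fun h : H => hiddenShiftState_eq_reindex_kronecker f fun g => hf g h]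
  ext i j
  simp [Matrix.sum_apply, Finset.sum_mul, mul_assoc]

open Kronecker in
/-- If the hidden shift is drawn uniformly from a subgroup `H ≤ G`, the resulting averaged
state is unitarily equivalent to the tensor product of the averaged hidden shift state for
`H` with the maximally mixed state of dimension `|G|/|H|` (indexed by the cosets `G ⧸ H`). -/
theorem restricted_hidden_shift_state_tensor_decomposition
    {G : Type*} [Group G] [Fintype G] [DecidableEq G]
    (H : Subgroup G) [Fintype ↥H] [Fintype (G ⧸ H)] [DecidableEq (G ⧸ H)] :
    ∃ (e : (G ⊕ G) ≃ ((↥H ⊕ ↥H) × (G ⧸ H))) (U : Matrix (G ⊕ G) (G ⊕ G) ℂ),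
      U ∈ Matrix.unitaryGroup (G ⊕ G) ℂ ∧
      U *
          ((Fintype.card ↥H : ℂ)⁻¹ • ∑ h : ↥H,
            (Fintype.card G : ℂ)⁻¹ • ∑ g : G,
              Matrix.vecMulVec
                (fun v : G ⊕ G => match v with
                  | Sum.inl a => if a = g then ((Real.sqrt 2 : ℂ))⁻¹ else 0
                  | Sum.inr a => if a = g * (h : G) then ((Real.sqrt 2 : ℂ))⁻¹ else 0)
                (star fun v : G ⊕ G => match v with
                  | Sum.inl a => if a = g then ((Real.sqrt 2 : ℂ))⁻¹ else 0
                  | Sum.inr a => if a = g * (h : G) then ((Real.sqrt 2 : ℂ))⁻¹ else 0)) *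
          star U
        = Matrix.reindex e.symm e.symm
            ((((Fintype.card ↥H : ℂ) ^ 2)⁻¹ • ∑ h : ↥H, ∑ h' : ↥H,
              Matrix.vecMulVec
                (fun v : ↥H ⊕ ↥H => match v with
                  | Sum.inl a => if a = h' then ((Real.sqrt 2 : ℂ))⁻¹ else 0
                  | Sum.inr a => if a = h' * h then ((Real.sqrt 2 : ℂ))⁻¹ else 0)
                (star fun v : ↥H ⊕ ↥H => match v with
                  | Sum.inl a => if a = h' then ((Real.sqrt 2 : ℂ))⁻¹ else 0
                  | Sum.inr a => if a = h' * h then ((Real.sqrt 2 : ℂ))⁻¹ else 0)) ⊗ₖ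
             ((Fintype.card (G ⧸ H) : ℂ)⁻¹ • (1 : Matrix (G ⧸ H) (G ⧸ H) ℂ))) := by
  obtain ⟨e, he⟩ := restricted_hidden_shift_state_tensor_decomposition_general H
  refine ⟨e, 1, one_mem _, ?_⟩
  rw [one_mul, star_one, mul_one, Finset.smul_sum]
  have uniform := he fun _ => (Fintype.card H : ℂ)⁻¹
  rw [← averagedHiddenShiftState_eq_sum] at uniform
  unfold hiddenShiftState averagedHiddenShiftState maximallyMixedState shiftProj at uniform
  -- The `match` of the statement reduces to `Sum.elim` only once the qubit value is known.
  convert uniform <;> rename_i v <;> cases v <;> rfl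
end
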